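/- Let g : ℝⁿ → Matrix (Fin n) (Fin n) ℝ be a smooth map, written g_{μν}(x), with g_{μν} = g_{νμ}, g(x) positive definite for every x, and satisfying the normal-coordinates condition ∑_μ x^μ g_{μν}(x) = x^ν for all x, ν. Then there exists exactly one smooth map e : ℝⁿ → Matrix (Fin n) (Fin n) ℝ, written e^a_μ(x), with e(x) invertible for every x (inverse entries e_a^μ(x)), satisfying: (one) ∑_μ x^μ e^a_μ(x) = x^a; (two) ∑_a x^a e^a_μ(x) = x^μ; (three) ∑_μ e_a^μ(x) ( ∑_ν x^ν ∂_ν e^b_μ(x) + e^b_μ(x) ) symmetric under interchange of a and b; and g_{μν}(x) = ∑_a e^a_μ(x) e^a_ν(x) for all x, μ, ν. -/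

import Mathlib

/-- The partial derivative `∂_μ f` of a real-valued function on `ℝⁿ`. -/
noncomputable def pd {n : ℕ} (μ : Fin n) (f : (Fin n → ℝ) → ℝ) (x : Fin n → ℝ) : ℝ :=
  fderiv ℝ f x (Pi.single μ 1)

/-!
Condition (one) forces `e 0 = 1`, and for `g = eᵀ e` the gauge condition is equivalent to the ray
equation `∂_r e = ½ e g⁻¹ ∂_r g`, where `∂_r = x^ν ∂_ν`. This is a linear ordinary differential
equation along each ray, so it has exactly one solution with `e 0 = 1`. Writing the solution with
the resolvent of a Volterra operator shows that it is smooth in `x`, even at the origin where the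
rays meet.

Conversely let `e` be this solution. Then `eᵀ e` and `g` solve the same linear ray equation, so they
agree. Differentiating `g(x) x = x` along the rays gives `(∂_r g) x = 0`, hence `(∂_r e) x = 0`, so
`e(x) x` equals `e(0) x = x`; and `eᵀ x = eᵀ e x = g x = x`.
-/

universe u

open Filter Set Topology
open scoped ContDiff Ring unitInterval

theorem contDiff_ringInverse_of_isUnit {X R : Type*} [NormedAddCommGroup X] [NormedSpace ℝ X]
    [NormedRing R] [NormedAlgebra ℝ R] [HasSummableGeomSeries R] {n : WithTop ℕ∞} {f : X → R}
    (hf : ContDiff ℝ n f) (hunit : ∀ x, IsUnit (f x)) :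
    ContDiff ℝ n fun x => (f x)⁻¹ʳ :=
  contDiff_iff_contDiffAt.2 fun x => by
    obtain ⟨u, hu⟩ := hunit x
    exact ContDiffAt.comp x (hu ▸ contDiffAt_ringInverse ℝ u) hf.contDiffAt

section Superposition

variable {K : Type*} [TopologicalSpace K] [CompactSpace K]
variable {E F : Type u} [NormedAddCommGroup E] [NormedSpace ℝ E]
  [NormedAddCommGroup F] [NormedSpace ℝ F]

variable (K E F) in
/-- Pointwise application `(L, φ) ↦ (s ↦ L s (φ s))` of a continuous family of continuous linear
maps, as a continuous bilinear map. -/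
noncomputable def pointwiseApply : C(K, E →L[ℝ] F) →L[ℝ] C(K, E) →L[ℝ] C(K, F) :=
  LinearMap.mkContinuous₂
    (LinearMap.mk₂ ℝ (fun (L : C(K, E →L[ℝ] F)) (φ : C(K, E)) =>
        (⟨fun s => L s (φ s), by fun_prop⟩ : C(K, F)))
      (fun _ _ _ => by ext; simp) (fun _ _ _ => by ext; simp)
      (fun _ _ _ => by ext; simp) (fun _ _ _ => by ext; simp))
    1 fun L φ => (ContinuousMap.norm_le _ (by positivity)).2 fun s => by
      simpa using (L s).le_of_opNorm_le_of_le (L.norm_coe_le_norm s) (φ.norm_coe_le_norm s)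

theorem hasFDerivAt_postcomp (f : C(E, F)) (f' : C(E, E →L[ℝ] F))
    (hf : ∀ x, HasFDerivAt f (f' x) x) (φ : C(K, E)) :
    HasFDerivAt (fun ψ : C(K, E) => f.comp ψ) (pointwiseApply K E F (f'.comp φ)) φ := by
  refine .of_isLittleO (Asymptotics.isLittleO_iff.2 fun ε hε => ?_)
  obtain ⟨δ, hδ, hball⟩ := (Metric.continuous_iff (α := C(K, E)) (β := C(K, E →L[ℝ] F))).1
    (ContinuousMap.continuous_postcomp f') φ ε hε
  -- Translating `φ` by a constant makes the modulus of continuity of `f'` uniform along `φ`.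
  have hderiv (s : K) (z : E) (hz : z ∈ Metric.ball (φ s) δ) : ‖f' z - f' (φ s)‖ ≤ ε := by
    have hdist : dist (φ + ContinuousMap.const K (z - φ s)) φ < δ := by
      rw [dist_eq_norm, add_sub_cancel_left]
      refine ((ContinuousMap.norm_le _ (norm_nonneg (z - φ s))).2 fun _ => le_rfl).trans_lt ?_
      rwa [← dist_eq_norm]
    simpa [dist_eq_norm] using (ContinuousMap.dist_apply_le_dist s).trans (hball _ hdist).le
  filter_upwards [Metric.ball_mem_nhds φ hδ] with ψ hψ
  refine (ContinuousMap.norm_le _ (by positivity)).2 fun s => ?_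
  have hψs : ψ s ∈ Metric.ball (φ s) δ := (ContinuousMap.dist_apply_le_dist s).trans_lt hψ
  refine ((convex_ball (φ s) δ).norm_image_sub_le_of_norm_hasFDerivWithin_le'
    (fun z _ => (hf z).hasFDerivWithinAt) (hderiv s) (Metric.mem_ball_self hδ) hψs).trans ?_
  gcongr
  exact (ψ - φ).norm_coe_le_norm s

theorem contDiff_nat_postcomp (n : ℕ) : ∀ {F : Type u} [NormedAddCommGroup F] [NormedSpace ℝ F]
    (f : C(E, F)), ContDiff ℝ n f → ContDiff ℝ n fun φ : C(K, E) => f.comp φ := by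
  induction n with
  | zero => exact fun f _ => contDiff_zero.2 (ContinuousMap.continuous_postcomp f)
  | succ n ih =>
    intro F _ _ f hf
    push_cast at hf ⊢
    obtain ⟨f', hf', hderiv⟩ := contDiff_succ_iff_hasFDerivAt.1 hf
    exact contDiff_succ_iff_hasFDerivAt.2
      ⟨_, (pointwiseApply K E F).contDiff.comp (ih ⟨f', hf'.continuous⟩ hf'),
        hasFDerivAt_postcomp f ⟨f', hf'.continuous⟩ hderiv⟩

theorem contDiff_postcomp {n : ℕ∞} (f : C(E, F)) (hf : ContDiff ℝ n f) :
    ContDiff ℝ n fun φ : C(K, E) => f.comp φ :=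
  contDiff_iff_forall_nat_le.2 fun m hm =>
    contDiff_nat_postcomp m f (contDiff_iff_forall_nat_le.1 hf m hm)

end Superposition

section Volterra

theorem isUnit_one_sub_of_norm_pow_lt_one {R : Type*} [NormedRing R] [HasSummableGeomSeries R]
    {a : R} {k : ℕ} (h : ‖a ^ k‖ < 1) : IsUnit (1 - a) := by
  have hcomm : Commute (1 - a) (∑ i ∈ Finset.range k, a ^ i) :=
    (mul_neg_geom_sum a k).trans (geom_sum_mul_neg a k).symm
  refine (hcomm.isUnit_mul_iff.1 ?_).1
  rw [mul_neg_geom_sum]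
  exact isUnit_one_sub_of_norm_lt_one h

variable {F : Type*} [NormedAddCommGroup F]

theorem intervalIntegrable_IccExtend (φ : C(I, F)) (a b : ℝ) :
    IntervalIntegrable (IccExtend zero_le_one φ) MeasureTheory.volume a b :=
  φ.continuous.Icc_extend'.intervalIntegrable a b

variable [NormedSpace ℝ F]

variable (F) in
/-- The operator `φ ↦ (t ↦ ∫ s in 0..t, φ s)` on continuous curves over the unit interval. -/
noncomputable def primitiveCLM : C(I, F) →L[ℝ] C(I, F) :=
  LinearMap.mkContinuous
    { toFun φ := ⟨fun t => ∫ s in (0 : ℝ)..t, IccExtend zero_le_one φ s,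
        (intervalIntegral.continuous_primitive (intervalIntegrable_IccExtend φ) 0).comp
          continuous_subtype_val⟩
      map_add' φ ψ := by
        ext t
        exact intervalIntegral.integral_add (intervalIntegrable_IccExtend φ _ _)
          (intervalIntegrable_IccExtend ψ _ _)
      map_smul' c φ := by
        ext t
        exact intervalIntegral.integral_smul c (IccExtend zero_le_one φ) }
    1 fun φ => (ContinuousMap.norm_le _ (by positivity)).2 fun t => by
      refine (intervalIntegral.norm_integral_le_of_norm_le_const
        fun s _ => φ.norm_coe_le_norm _).trans ?_
      rw [sub_zero, abs_of_nonneg t.2.1, mul_comm]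
      gcongr
      exact t.2.2

/-- The Volterra operator `φ ↦ (t ↦ ∫ s in 0..t, L s (φ s))` with kernel `L`, depending linearly
on `L`. -/
noncomputable def volterra : C(I, F →L[ℝ] F) →L[ℝ] C(I, F) →L[ℝ] C(I, F) :=
  (ContinuousLinearMap.compL ℝ _ _ _ (primitiveCLM F)).comp (pointwiseApply I F F)

theorem volterra_apply (L : C(I, F →L[ℝ] F)) (φ : C(I, F)) (t : I) :
    volterra L φ t =
      ∫ s in (0 : ℝ)..t, IccExtend zero_le_one L s (IccExtend zero_le_one φ s) := rfl

theorem norm_volterra_pow_apply_le (L : C(I, F →L[ℝ] F)) (φ : C(I, F)) (k : ℕ) (t : I) :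
    ‖(volterra L ^ k) φ t‖ ≤ ‖L‖ ^ k * (t : ℝ) ^ k / k.factorial * ‖φ‖ := by
  induction k generalizing t with
  | zero => simpa using φ.norm_coe_le_norm t
  | succ k ih =>
    calc ‖(volterra L ^ (k + 1)) φ t‖
      _ = ‖volterra L ((volterra L ^ k) φ) t‖ := by rw [pow_succ', mul_apply_eq_comp]
      _ ≤ ∫ s in (0 : ℝ)..t, ‖L‖ * (‖L‖ ^ k * s ^ k / k.factorial * ‖φ‖) := by
        refine intervalIntegral.norm_integral_le_of_norm_le t.2.1
          (Eventually.of_forall fun s hs => ?_) (Continuous.intervalIntegrable (by fun_prop) _ _)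
        have hs' : s ∈ I := ⟨hs.1.le, hs.2.trans t.2.2⟩
        rw [IccExtend_of_mem _ _ hs']
        exact (L ⟨s, hs'⟩).le_of_opNorm_le_of_le (L.norm_coe_le_norm _) (ih ⟨s, hs'⟩)
      _ = ‖L‖ ^ (k + 1) / k.factorial * ‖φ‖ * ∫ s in (0 : ℝ)..t, s ^ k := by
        rw [← intervalIntegral.integral_const_mul]
        exact intervalIntegral.integral_congr fun s _ => by ring
      _ = ‖L‖ ^ (k + 1) * (t : ℝ) ^ (k + 1) / (k + 1).factorial * ‖φ‖ := by
        rw [integral_pow, Nat.factorial_succ]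
        push_cast
        field_simp
        simp

theorem norm_volterra_pow_le (L : C(I, F →L[ℝ] F)) (k : ℕ) :
    ‖volterra L ^ k‖ ≤ ‖L‖ ^ k / k.factorial := by
  refine ContinuousLinearMap.opNorm_le_bound _ (by positivity) fun φ =>
    (ContinuousMap.norm_le _ (by positivity)).2 fun t =>
      (norm_volterra_pow_apply_le L φ k t).trans ?_
  gcongr
  exact mul_le_of_le_one_right (by positivity) (pow_le_one₀ t.2.1 t.2.2)

theorem isUnit_one_sub_volterra [CompleteSpace F] (L : C(I, F →L[ℝ] F)) :
    IsUnit (1 - volterra L) := by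
  obtain ⟨k, hk⟩ := ((FloorSemiring.tendsto_pow_div_factorial_atTop ‖L‖).eventually_lt_const
    zero_lt_one).exists
  exact isUnit_one_sub_of_norm_pow_lt_one (R := C(I, F) →L[ℝ] C(I, F))
    ((norm_volterra_pow_le L k).trans_lt hk)

end Volterra

section RadialCalculus

variable {X F : Type*} [NormedAddCommGroup X] [NormedSpace ℝ X]
  [NormedAddCommGroup F] [NormedSpace ℝ F]

/-- The Euler operator `x^ν ∂_ν`, differentiating `f` along the radial vector field. -/
noncomputable def radialDeriv (f : X → F) (x : X) : F := fderiv ℝ f x x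

theorem hasDerivAt_comp_smul {f : X → F} {x : X} {t : ℝ} (hf : DifferentiableAt ℝ f (t • x)) :
    HasDerivAt (fun s : ℝ => f (s • x)) (fderiv ℝ f (t • x) x) t := by
  have hray : HasDerivAt (fun s : ℝ => s • x) x t := by
    simpa using (hasDerivAt_id t).smul_const x
  exact hf.hasFDerivAt.comp_hasDerivAt t hray

theorem radialDeriv_clm_comp {G : Type*} [NormedAddCommGroup G] [NormedSpace ℝ G] (L : F →L[ℝ] G)
    {f : X → F} {x : X} (hf : DifferentiableAt ℝ f x) :
    radialDeriv (fun y => L (f y)) x = L (radialDeriv f x) :=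
  congr($((L.hasFDerivAt.comp x hf.hasFDerivAt).fderiv) x)

theorem apply_zero_eq_one_of_apply_self {φ : X → X →L[ℝ] X} (hφ : DifferentiableAt ℝ φ 0)
    (h : ∀ x, φ x x = x) : φ 0 = 1 := by
  simpa [h, eq_comm, ContinuousLinearMap.one_def] using fderiv_clm_apply hφ differentiableAt_id

theorem radialDeriv_apply_eq_zero_of_apply_self {φ : X → X →L[ℝ] X} {x : X}
    (hφ : DifferentiableAt ℝ φ x) (h : ∀ y, φ y y = y) : radialDeriv φ x x = 0 := by
  simpa [h, radialDeriv] using congr($(fderiv_clm_apply hφ differentiableAt_id) x)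

theorem apply_self_of_radialDeriv_apply_eq_zero {φ : X → X →L[ℝ] X} (hφ : Differentiable ℝ φ)
    (h : ∀ x, radialDeriv φ x x = 0) (x : X) : φ x x = φ 0 x := by
  have hderiv (s : ℝ) : HasDerivAt (fun s : ℝ => φ (s • x) x) (fderiv ℝ φ (s • x) x x) s := by
    simpa using (hasDerivAt_comp_smul (x := x) (hφ _)).clm_apply (hasDerivAt_const s x)
  have hderiv_pos : EqOn (deriv fun s : ℝ => φ (s • x) x) 0 (Ioi 0) := fun s (hs : 0 < s) => by
    simpa [(hderiv s).deriv, radialDeriv, hs.ne'] using h (s • x)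
  have hdiff : Differentiable ℝ fun s : ℝ => φ (s • x) x := fun s => (hderiv s).differentiableAt
  have hconst : EqOn (fun s : ℝ => φ (s • x) x) (fun _ => φ ((1 : ℝ) • x) x) (Ioi 0) :=
    fun s hs => isOpen_Ioi.is_const_of_deriv_eq_zero isPreconnected_Ioi hdiff.differentiableOn
      hderiv_pos hs (mem_Ioi.2 one_pos)
  have hzero : (0 : ℝ) ∈ closure (Ioi 0) := by simp
  simpa using (hconst.closure hdiff.continuous continuous_const hzero).symm

variable {A : Type*} [NormedRing A] [NormedAlgebra ℝ A]

theorem radialDeriv_mul {f h : X → A} {x : X} (hf : DifferentiableAt ℝ f x)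
    (hh : DifferentiableAt ℝ h x) :
    radialDeriv (f * h) x = radialDeriv f x * h x + f x * radialDeriv h x :=
  (congr($(fderiv_mul' hf hh) x)).trans (add_comm _ _)

theorem radialDeriv_star [StarRing A] [StarModule ℝ A] [ContinuousStar A] (f : X → A) (x : X) :
    radialDeriv (star f) x = star (radialDeriv f x) := by
  simp [radialDeriv, Pi.star_def]

theorem radialDeriv_star_mul_self [StarRing A] [StarModule ℝ A] [ContinuousStar A] {f : X → A}
    {x : X} (hf : DifferentiableAt ℝ f x) :
    radialDeriv (star f * f) x = star (radialDeriv f x) * f x + star (f x) * radialDeriv f x :=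
  (radialDeriv_mul hf.star hf).trans congr($(radialDeriv_star f x) * _ + _)

end RadialCalculus

section RadialEquation

variable {X F : Type u} [NormedAddCommGroup X] [NormedSpace ℝ X]
  [NormedAddCommGroup F] [NormedSpace ℝ F]

/-- The coefficient of the linear ray equation `d/ds u (s • x) = Γ (s • x) x (u (s • x))`
determined by an operator-valued one-form `Γ`. -/
noncomputable def rayKernel (Γ : C(X, X →L[ℝ] F →L[ℝ] F)) (x : X) : C(I, F →L[ℝ] F) :=
  ⟨fun s => Γ ((s : ℝ) • x) x, by fun_prop⟩

@[simp]
theorem rayKernel_apply (Γ : C(X, X →L[ℝ] F →L[ℝ] F)) (x : X) (s : I) :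
    rayKernel Γ x s = Γ ((s : ℝ) • x) x := rfl

theorem contDiff_rayKernel {n : ℕ∞} {Γ : C(X, X →L[ℝ] F →L[ℝ] F)} (hΓ : ContDiff ℝ n Γ) :
    ContDiff ℝ n (rayKernel Γ) := by
  let evalPair : C(X × X, F →L[ℝ] F) := ⟨fun p => Γ p.1 p.2, by fun_prop⟩
  let ray : X →L[ℝ] C(I, X × X) := LinearMap.mkContinuous
    { toFun x := ⟨fun s => ((s : ℝ) • x, x), by fun_prop⟩
      map_add' x y := by ext s <;> simp
      map_smul' c x := by ext s <;> simp [smul_comm c] }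
    1 fun x => (ContinuousMap.norm_le _ (by positivity)).2 fun s => by
      simpa [Prod.norm_def, norm_smul, abs_of_nonneg s.2.1] using
        mul_le_of_le_one_left (norm_nonneg x) s.2.2
  have heval : ContDiff ℝ n evalPair := (hΓ.comp contDiff_fst).clm_apply contDiff_snd
  exact (contDiff_postcomp evalPair heval).comp ray.contDiff

/-- The solution along `s ↦ s • x`, `s ∈ [0, 1]`, of the ray equation with coefficient
`rayKernel Γ x` and initial value `v`, written with the resolvent of the Volterra operator. -/
noncomputable def rayTransport (Γ : C(X, X →L[ℝ] F →L[ℝ] F)) (v : F) (x : X) : C(I, F) :=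
  (1 - volterra (rayKernel Γ x))⁻¹ʳ (.const I v)

variable [CompleteSpace F] {Γ : C(X, X →L[ℝ] F →L[ℝ] F)}

theorem eq_rayTransport_iff {v : F} {x : X} {φ : C(I, F)} :
    φ = rayTransport Γ v x ↔ φ = .const I v + volterra (rayKernel Γ x) φ := by
  have hunit := isUnit_one_sub_volterra (rayKernel Γ x)
  rw [← sub_eq_iff_eq_add]
  constructor
  · rintro rfl
    exact congr($(Ring.mul_inverse_cancel _ hunit) (.const I v))
  · intro h
    rw [rayTransport, ← h]
    exact congr($(Ring.inverse_mul_cancel _ hunit) φ).symm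

theorem rayTransport_apply (v : F) (x : X) (t : I) :
    rayTransport Γ v x t = v + ∫ s in (0 : ℝ)..t,
      IccExtend zero_le_one (rayKernel Γ x) s
        (IccExtend zero_le_one (rayTransport Γ v x) s) :=
  congr($(eq_rayTransport_iff.1 rfl) t)

theorem rayTransport_smul_one (v : F) (x : X) (t : I) :
    rayTransport Γ v ((t : ℝ) • x) 1 = rayTransport Γ v x t := by
  let restricted : C(I, F) := ⟨fun s => rayTransport Γ v x (t * s), by fun_prop⟩
  suffices restricted = rayTransport Γ v ((t : ℝ) • x) by simp [← this, restricted]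
  refine eq_rayTransport_iff.2 (ContinuousMap.ext fun s => ?_)
  change rayTransport Γ v x (t * s) = v + volterra (rayKernel Γ ((t : ℝ) • x)) restricted s
  have hscale := intervalIntegral.smul_integral_comp_mul_left (a := 0) (b := s)
    (fun r => IccExtend zero_le_one (rayKernel Γ x) r
      (IccExtend zero_le_one (rayTransport Γ v x) r)) (t : ℝ)
  rw [mul_zero] at hscale
  rw [rayTransport_apply, Set.Icc.coe_mul, volterra_apply, ← hscale,
    ← intervalIntegral.integral_smul]
  congr 1
  refine intervalIntegral.integral_congr fun r hr => ?_
  rw [uIcc_of_le s.2.1] at hr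
  have hr' : r ∈ I := ⟨hr.1, hr.2.trans s.2.2⟩
  have htr : (t : ℝ) * r ∈ I := unitInterval.mul_mem t.2 hr'
  simp only [IccExtend_of_mem _ _ hr', IccExtend_of_mem _ _ htr, rayKernel_apply, map_smul,
    smul_smul, mul_comm r, smul_apply]
  rfl

theorem contDiff_rayTransport_apply {n : ℕ∞} (hΓ : ContDiff ℝ n Γ) (v : F) (t : I) :
    ContDiff ℝ n fun x => rayTransport Γ v x t := by
  have hvolterra : ContDiff ℝ n fun x => volterra (rayKernel Γ x) :=
    contDiff_const.clm_apply (contDiff_rayKernel hΓ)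
  have hresolvent : ContDiff ℝ n fun x => (1 - volterra (rayKernel Γ x))⁻¹ʳ :=
    contDiff_ringInverse_of_isUnit (R := C(I, F) →L[ℝ] C(I, F))
      (contDiff_const.sub hvolterra) fun x => isUnit_one_sub_volterra (rayKernel Γ x)
  exact (ContinuousMap.evalCLM ℝ t).contDiff.comp (hresolvent.clm_apply contDiff_const)

theorem radialDeriv_rayTransport_one {n : ℕ∞} (hΓ : ContDiff ℝ n Γ) (hn : n ≠ 0) (v : F) (x : X) :
    radialDeriv (fun y => rayTransport Γ v y 1) x = Γ x x (rayTransport Γ v x 1) := by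
  have hdiff : Differentiable ℝ fun y => rayTransport Γ v y 1 :=
    (contDiff_rayTransport_apply hΓ v 1).differentiable (by exact_mod_cast hn)
  have hray := hasDerivAt_comp_smul (hdiff ((1 : ℝ) • x))
  rw [one_smul] at hray
  let integrand (s : ℝ) : F := IccExtend zero_le_one (rayKernel Γ x) s
    (IccExtend zero_le_one (rayTransport Γ v x) s)
  have hcont : Continuous integrand :=
    (rayKernel Γ x).continuous.Icc_extend'.clm_apply (rayTransport Γ v x).continuous.Icc_extend'
  have hintegral : HasDerivAt (fun t => v + ∫ s in (0 : ℝ)..t, integrand s) (integrand 1) 1 :=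
    (hcont.integral_hasStrictDerivAt 0 1).hasDerivAt.const_add v
  have hone : (1 : ℝ) ∈ I := unitInterval.one_mem
  have heq (t : ℝ) (ht : t ∈ I) :
      rayTransport Γ v (t • x) 1 = v + ∫ s in (0 : ℝ)..t, integrand s :=
    (rayTransport_smul_one v x ⟨t, ht⟩).trans (rayTransport_apply v x ⟨t, ht⟩)
  calc radialDeriv (fun y => rayTransport Γ v y 1) x
    _ = integrand 1 := (uniqueDiffOn_Icc zero_lt_one 1 hone).eq_deriv _ hray.hasDerivWithinAt
      (hintegral.hasDerivWithinAt.congr heq (heq 1 hone))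
    _ = Γ x x (rayTransport Γ v x 1) := by
      simp only [integrand, IccExtend_of_mem _ _ hone, rayKernel_apply, one_smul]
      rfl

theorem exists_contDiff_radialDeriv_eq {n : ℕ∞} (hΓ : ContDiff ℝ n Γ) (hn : n ≠ 0) (v : F) :
    ∃ u : X → F, ContDiff ℝ n u ∧ u 0 = v ∧ ∀ x, radialDeriv u x = Γ x x (u x) := by
  refine ⟨fun x => rayTransport Γ v x 1, contDiff_rayTransport_apply hΓ v 1, ?_,
    radialDeriv_rayTransport_one hΓ hn v⟩
  simpa using (rayTransport_smul_one v (0 : X) 0).trans (rayTransport_apply v 0 0)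

theorem eq_rayTransport_of_radialDeriv_eq {u : X → F} (hu : Differentiable ℝ u)
    (h : ∀ x, radialDeriv u x = Γ x x (u x)) (x : X) : u x = rayTransport Γ (u 0) x 1 := by
  let curve : C(I, F) := ⟨fun s => u ((s : ℝ) • x), hu.continuous.comp (by fun_prop)⟩
  suffices curve = rayTransport Γ (u 0) x by simp [← this, curve]
  refine eq_rayTransport_iff.2 (ContinuousMap.ext fun t => ?_)
  have hderiv (s : ℝ) (hs : s ∈ Ioo (0 : ℝ) t) : HasDerivAt (fun s : ℝ => u (s • x))
      (IccExtend zero_le_one (rayKernel Γ x) s (IccExtend zero_le_one curve s)) s := by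
    have hsI : s ∈ I := ⟨hs.1.le, hs.2.le.trans t.2.2⟩
    have hray : fderiv ℝ u (s • x) x = Γ (s • x) x (u (s • x)) :=
      smul_right_injective F hs.1.ne' (by simpa [radialDeriv] using h (s • x))
    rw [IccExtend_of_mem _ _ hsI, IccExtend_of_mem _ _ hsI, rayKernel_apply]
    exact hray ▸ hasDerivAt_comp_smul (hu _)
  have hftc := intervalIntegral.integral_eq_sub_of_hasDerivAt_of_le t.2.1
    (hu.continuous.comp (by fun_prop : Continuous fun s : ℝ => s • x)).continuousOn hderiv
    (((rayKernel Γ x).continuous.Icc_extend'.clm_apply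
      curve.continuous.Icc_extend').intervalIntegrable _ _)
  simp only [Function.comp_apply, zero_smul] at hftc
  exact eq_add_of_sub_eq' hftc.symm

theorem eq_of_radialDeriv_eq (Γ : C(X, X →L[ℝ] F →L[ℝ] F)) {u v : X → F}
    (hu : Differentiable ℝ u) (hv : Differentiable ℝ v) (hu' : ∀ x, radialDeriv u x = Γ x x (u x))
    (hv' : ∀ x, radialDeriv v x = Γ x x (v x)) (h0 : u 0 = v 0) : u = v := by
  ext x
  rw [eq_rayTransport_of_radialDeriv_eq hu hu', eq_rayTransport_of_radialDeriv_eq hv hv', h0]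

end RadialEquation

section MulEquation

variable {X A : Type u} [NormedAddCommGroup X] [NormedSpace ℝ X]
  [NormedRing A] [NormedAlgebra ℝ A]

/-- The operator-valued one-form `v ↦ (a ↦ α x v * a + a * β x v)`, the coefficient of the two-sided
linear ray equation `∂_r u = α u + u β`. -/
noncomputable def mulForm (α β : X → X →L[ℝ] A) (x : X) : X →L[ℝ] A →L[ℝ] A :=
  ContinuousLinearMap.mul ℝ A ∘L α x + (ContinuousLinearMap.mul ℝ A).flip ∘L β x

theorem contDiff_mulForm {n : WithTop ℕ∞} {α β : X → X →L[ℝ] A} (hα : ContDiff ℝ n α)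
    (hβ : ContDiff ℝ n β) : ContDiff ℝ n (mulForm α β) :=
  (contDiff_const.clm_comp hα).add (contDiff_const.clm_comp hβ)

variable [CompleteSpace A]

theorem exists_contDiff_radialDeriv_eq_mul_add_mul {n : ℕ∞} {α β : X → X →L[ℝ] A}
    (hα : ContDiff ℝ n α) (hβ : ContDiff ℝ n β) (hn : n ≠ 0) (a : A) :
    ∃ u : X → A, ContDiff ℝ n u ∧ u 0 = a ∧
      ∀ x, radialDeriv u x = α x x * u x + u x * β x x :=
  have hΓ := contDiff_mulForm hα hβ
  exists_contDiff_radialDeriv_eq (Γ := ⟨mulForm α β, hΓ.continuous⟩) hΓ hn a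

theorem eq_of_radialDeriv_eq_mul_add_mul {α β : X → X →L[ℝ] A} (hα : Continuous α)
    (hβ : Continuous β) {u v : X → A} (hu : Differentiable ℝ u) (hv : Differentiable ℝ v)
    (hu' : ∀ x, radialDeriv u x = α x x * u x + u x * β x x)
    (hv' : ∀ x, radialDeriv v x = α x x * v x + v x * β x x) (h0 : u 0 = v 0) : u = v :=
  have hΓ := contDiff_mulForm (contDiff_zero.2 hα) (contDiff_zero.2 hβ)
  eq_of_radialDeriv_eq ⟨mulForm α β, hΓ.continuous⟩ hu hv hu' hv' h0

theorem isUnit_of_radialDeriv_eq_mul {n : ℕ∞} {β : X → X →L[ℝ] A} (hβ : ContDiff ℝ n β)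
    (hn : n ≠ 0) {e : X → A} (he : Differentiable ℝ e) (h0 : e 0 = 1)
    (he' : ∀ x, radialDeriv e x = e x * β x x) (x : X) : IsUnit (e x) := by
  obtain ⟨f, hf, hf0, hf'⟩ := exists_contDiff_radialDeriv_eq_mul_add_mul (n := n)
    hβ.neg (contDiff_const (c := 0)) hn 1
  have hf : Differentiable ℝ f := hf.differentiable (by exact_mod_cast hn)
  have hone (x : X) : radialDeriv (1 : X → A) x = 0 := by simp [radialDeriv]
  have hef : e * f = 1 := by
    refine eq_of_radialDeriv_eq_mul_add_mul (α := 0) (β := 0) continuous_const continuous_const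
      (he.mul hf) (differentiable_const 1) (fun x => ?_) (fun x => by simp [hone])
      (by simp [h0, hf0])
    simp [radialDeriv_mul (he x) (hf x), he', hf', mul_assoc]
  have hfe : f * e = 1 := by
    refine eq_of_radialDeriv_eq_mul_add_mul (α := -β) (β := β) hβ.neg.continuous hβ.continuous
      (hf.mul he) (differentiable_const 1) (fun x => ?_) (fun x => by simp [hone])
      (by simp [h0, hf0])
    simp [radialDeriv_mul (hf x) (he x), he', hf', mul_assoc]
  exact ⟨⟨e x, f x, congrFun hef x, congrFun hfe x⟩, rfl⟩

theorem star_mul_self_eq_of_radialDeriv_eq_mul [StarRing A] [StarModule ℝ A] [ContinuousStar A]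
    {β : X → X →L[ℝ] A} (hβ : Continuous β) {e g : X → A} (he : Differentiable ℝ e)
    (hg : Differentiable ℝ g) (he' : ∀ x, radialDeriv e x = e x * β x x)
    (hg' : ∀ x, radialDeriv g x = star (β x x) * g x + g x * β x x)
    (h0 : star (e 0) * e 0 = g 0) (x : X) : star (e x) * e x = g x := by
  have hstar : Continuous fun x => (starL' ℝ : A ≃L[ℝ] A).toContinuousLinearMap ∘L β x := by
    fun_prop
  refine congrFun (eq_of_radialDeriv_eq_mul_add_mul hstar hβ (he.star.mul he) hg (fun x => ?_)
    hg' h0) x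
  calc radialDeriv (star e * e) x
    _ = star (e x * β x x) * e x + star (e x) * (e x * β x x) := by
      rw [radialDeriv_star_mul_self (he x), he']
    _ = star (β x x) * (star (e x) * e x) + star (e x) * e x * β x x := by
      rw [star_mul, mul_assoc, mul_assoc]

end MulEquation

section Vielbein

theorem isSelfAdjoint_mul_ringInverse_iff {A : Type*} [Ring A] [StarRing A] [Algebra ℝ A]
    {e d : A} (he : IsUnit e) : IsSelfAdjoint (d * e⁻¹ʳ) ↔
      d = e * ((2⁻¹ : ℝ) • ((star e * e)⁻¹ʳ * (star d * e + star e * d))) := by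
  obtain ⟨u, rfl⟩ := he
  have hexpand : (u : A) * ((2⁻¹ : ℝ) • ((star (u : A) * u)⁻¹ʳ * (star d * u + star (u : A) * d)))
      = (2⁻¹ : ℝ) • (star (d * ↑u⁻¹) * u + d) := by
    rw [← Units.coe_star, ← Units.val_mul, Ring.inverse_unit, mul_inv_rev, mul_smul_comm]
    have hcancel : ((star u)⁻¹ : Aˣ) * (star (u : A) * d) = d := by
      rw [← Units.coe_star, Units.inv_mul_cancel_left]
    simp [mul_add, mul_assoc, hcancel, ← Units.coe_star_inv]
  rw [hexpand, Ring.inverse_unit, isSelfAdjoint_iff, Units.eq_mul_inv_iff_mul_eq,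
    eq_inv_smul_iff₀ two_ne_zero, two_smul, add_left_inj, eq_comm]

variable {X A : Type*} [NormedAddCommGroup X] [NormedSpace ℝ X]
  [NormedRing A] [NormedAlgebra ℝ A]

/-- Half the logarithmic derivative of a metric `g`, the one-form `v ↦ ½ g⁻¹ ∂_v g`: the ray
equation `∂_r e = ½ e g⁻¹ ∂_r g` has it as coefficient. -/
noncomputable def halfLogDeriv (g : X → A) (x : X) : X →L[ℝ] A :=
  (2⁻¹ : ℝ) • (ContinuousLinearMap.mul ℝ A (g x)⁻¹ʳ ∘L fderiv ℝ g x)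

theorem halfLogDeriv_apply_self (g : X → A) (x : X) :
    halfLogDeriv g x x = (2⁻¹ : ℝ) • ((g x)⁻¹ʳ * radialDeriv g x) := rfl

theorem contDiff_halfLogDeriv [HasSummableGeomSeries A] {g : X → A} (hg : ContDiff ℝ ∞ g)
    (hunit : ∀ x, IsUnit (g x)) : ContDiff ℝ ∞ (halfLogDeriv g) :=
  (((ContinuousLinearMap.mul ℝ A).contDiff.comp (contDiff_ringInverse_of_isUnit hg hunit)).clm_comp
    (hg.fderiv_right le_rfl)).const_smul _

theorem apply_zero_eq_one_of_injective {ρ : A →A[ℝ] (X →L[ℝ] X)} (hρ : Function.Injective ρ)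
    {f : X → A} (hf : Differentiable ℝ f) (h : ∀ x, ρ (f x) x = x) : f 0 = 1 := by
  have hρf : Differentiable ℝ fun x => ρ (f x) := ρ.toContinuousLinearMap.differentiable.comp hf
  exact hρ ((apply_zero_eq_one_of_apply_self (hρf 0) h).trans (map_one ρ).symm)

variable [StarRing A]

/-- `e` is a smooth vielbein of the metric `g` in the symmetric radial gauge. Here `x^μ e^a_μ` is
encoded as `ρ (e x) x`, with `ρ` representing `A` on `X`, and `radialDeriv e x * (e x)⁻¹ʳ`
is the matrix `e_a^μ x^ν ∂_ν e^b_μ`; the further summand `e_a^μ e^b_μ = δ_a^b` of the gauge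
condition is symmetric anyway and has been dropped. -/
structure IsSymmetricGaugeVielbein (ρ : A →A[ℝ] (X →L[ℝ] X)) (g e : X → A) : Prop where
  contDiff : ContDiff ℝ ∞ e
  isUnit (x : X) : IsUnit (e x)
  apply_self (x : X) : ρ (e x) x = x
  star_apply_self (x : X) : ρ (star (e x)) x = x
  isSelfAdjoint (x : X) : IsSelfAdjoint (radialDeriv e x * (e x)⁻¹ʳ)
  star_mul_self : star e * e = g

variable [StarModule ℝ A] [ContinuousStar A]

theorem radialDeriv_metric_eq {g : X → A} {x : X} (hunit : IsUnit (g x))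
    (hsymm : ∀ y, IsSelfAdjoint (g y)) :
    radialDeriv g x = star (halfLogDeriv g x x) * g x + g x * halfLogDeriv g x x := by
  have hsymm' : star (radialDeriv g x) = radialDeriv g x := by
    rw [← radialDeriv_star]
    exact congr(radialDeriv $(funext hsymm) x)
  rw [halfLogDeriv_apply_self]
  simp only [star_smul, star_mul, ← Ring.inverse_star, hsymm', (hsymm x).star_eq, star_trivial,
    smul_mul_assoc, mul_smul_comm, mul_assoc, Ring.inverse_mul_cancel _ hunit,
    Ring.mul_inverse_cancel_left _ _ hunit, mul_one]
  rw [← two_smul ℝ, smul_inv_smul₀ two_ne_zero]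

theorem isSelfAdjoint_radialDeriv_mul_ringInverse_iff {e g : X → A} {x : X}
    (he : DifferentiableAt ℝ e x) (hunit : IsUnit (e x)) (hg : star e * e = g) :
    IsSelfAdjoint (radialDeriv e x * (e x)⁻¹ʳ) ↔
      radialDeriv e x = e x * halfLogDeriv g x x := by
  rw [isSelfAdjoint_mul_ringInverse_iff hunit, halfLogDeriv_apply_self, ← hg,
    radialDeriv_star_mul_self he, Pi.mul_apply, Pi.star_apply]

namespace IsSymmetricGaugeVielbein

variable {ρ : A →A[ℝ] (X →L[ℝ] X)} {g e : X → A}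

omit [StarModule ℝ A] [ContinuousStar A] in
theorem differentiable (h : IsSymmetricGaugeVielbein ρ g e) : Differentiable ℝ e :=
  h.contDiff.differentiable (by simp)

theorem radialDeriv_eq (h : IsSymmetricGaugeVielbein ρ g e) (x : X) :
    radialDeriv e x = e x * halfLogDeriv g x x :=
  (isSelfAdjoint_radialDeriv_mul_ringInverse_iff (h.differentiable x) (h.isUnit x)
    h.star_mul_self).1 (h.isSelfAdjoint x)

end IsSymmetricGaugeVielbein

end Vielbein

section ExistenceUniqueness

variable {X A : Type u} [NormedAddCommGroup X] [NormedSpace ℝ X]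
  [NormedRing A] [NormedAlgebra ℝ A] [CompleteSpace A]
  [StarRing A] [StarModule ℝ A] [ContinuousStar A] {ρ : A →A[ℝ] (X →L[ℝ] X)}

theorem IsSymmetricGaugeVielbein.eq {g e e' : X → A} (h : IsSymmetricGaugeVielbein ρ g e)
    (h' : IsSymmetricGaugeVielbein ρ g e') (hρ : Function.Injective ρ) (hg : ContDiff ℝ ∞ g) :
    e = e' := by
  have hunit (x : X) : IsUnit (g x) := by
    rw [← h.star_mul_self]
    exact (h.isUnit x).star.mul (h.isUnit x)
  exact eq_of_radialDeriv_eq_mul_add_mul (α := 0) continuous_const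
    (contDiff_halfLogDeriv hg hunit).continuous h.differentiable h'.differentiable
    (by simpa using h.radialDeriv_eq) (by simpa using h'.radialDeriv_eq)
    ((apply_zero_eq_one_of_injective hρ h.differentiable h.apply_self).trans
      (apply_zero_eq_one_of_injective hρ h'.differentiable h'.apply_self).symm)

theorem exists_isSymmetricGaugeVielbein (hρ : Function.Injective ρ) {g : X → A}
    (hg : ContDiff ℝ ∞ g) (hunit : ∀ x, IsUnit (g x)) (hsymm : ∀ x, IsSelfAdjoint (g x))
    (hnormal : ∀ x, ρ (g x) x = x) : ∃ e, IsSymmetricGaugeVielbein ρ g e := by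
  have hΩ := contDiff_halfLogDeriv hg hunit
  have hgd : Differentiable ℝ g := hg.differentiable (by simp)
  have hρd {f : X → A} (hf : Differentiable ℝ f) : Differentiable ℝ fun x => ρ (f x) :=
    ρ.toContinuousLinearMap.differentiable.comp hf
  have hg0 : g 0 = 1 := apply_zero_eq_one_of_injective hρ hgd hnormal
  obtain ⟨e, he, he0, he'⟩ := exists_contDiff_radialDeriv_eq_mul_add_mul (α := 0)
    contDiff_const hΩ (by simp) 1
  simp only [Pi.zero_apply, zero_apply, zero_mul, zero_add] at he'
  have hed : Differentiable ℝ e := he.differentiable (by simp)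
  have heunit := isUnit_of_radialDeriv_eq_mul hΩ (by simp) hed he0 he'
  have heg : star e * e = g := funext <| star_mul_self_eq_of_radialDeriv_eq_mul hΩ.continuous
    hed hgd he' (fun x => radialDeriv_metric_eq (hunit x) hsymm) (by simp [he0, hg0])
  have hradial (x : X) : ρ (radialDeriv e x) x = 0 := by
    have hgx : ρ (radialDeriv g x) x = 0 := by
      rw [← ρ.coe_toContinuousLinearMap, ← radialDeriv_clm_comp ρ.toContinuousLinearMap (hgd x)]
      exact radialDeriv_apply_eq_zero_of_apply_self (hρd hgd x) hnormal
    simp [he', halfLogDeriv_apply_self, hgx]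
  have happly (x : X) : ρ (e x) x = x := by
    simpa [he0] using apply_self_of_radialDeriv_apply_eq_zero (hρd hed) (fun y =>
      congr($(radialDeriv_clm_comp ρ.toContinuousLinearMap (hed y)) y).trans (hradial y)) x
  refine ⟨e, he, heunit, happly, fun x => ?_, fun x =>
    (isSelfAdjoint_radialDeriv_mul_ringInverse_iff (hed x) (heunit x) heg).2 (he' x), heg⟩
  calc ρ (star (e x)) x = ρ (star (e x)) (ρ (e x) x) := by rw [happly]
    _ = ρ (g x) x := by rw [← heg]; simp
    _ = x := hnormal x

theorem existsUnique_vielbein_of_normal_coordinates_metric_general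
    (hρ : Function.Injective ρ) {g : X → A} (hg : ContDiff ℝ ∞ g) (hsymm : ∀ x, IsSelfAdjoint (g x))
    (hunit : ∀ x, IsUnit (g x)) (hnormal : ∀ x, ρ (g x) x = x) :
    ∃! e, IsSymmetricGaugeVielbein ρ g e :=
  (exists_isSymmetricGaugeVielbein hρ hg hunit hsymm hnormal).elim fun _ he =>
    ⟨_, he, fun _ he' => he'.eq he hρ hg⟩

end ExistenceUniqueness

section Matrix

open Matrix
open scoped Matrix.Norms.L2Operator

variable {m : Type*} [Fintype m] [DecidableEq m]

theorem contDiff_matrix_iff {X : Type*} [NormedAddCommGroup X] [NormedSpace ℝ X]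
    {k : WithTop ℕ∞} {f : X → Matrix m m ℝ} :
    ContDiff ℝ k f ↔ ∀ i j, ContDiff ℝ k fun x => f x i j := by
  rw [← (Matrix.ofLinearEquiv ℝ).symm.toContinuousLinearEquiv.comp_contDiff_iff, contDiff_pi]
  exact forall_congr' fun _ => contDiff_pi

theorem sum_mul_pd_eq_radialDeriv {n : ℕ} (f : (Fin n → ℝ) → ℝ) (x : Fin n → ℝ) :
    ∑ ν, x ν * pd ν f x = radialDeriv f x :=
  calc ∑ ν, x ν * pd ν f x
    _ = fderiv ℝ f x (∑ ν, Pi.single ν (x ν)) := by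
      simp only [pd, map_sum, ← smul_eq_mul, ← map_smul, ← Pi.single_smul]
      simp only [smul_eq_mul, mul_one]
    _ = radialDeriv f x := by rw [Finset.univ_sum_single, radialDeriv]

theorem sum_mul_pd_entry_eq_radialDeriv {n : ℕ} {e : (Fin n → ℝ) → Matrix m m ℝ} {x : Fin n → ℝ}
    (he : DifferentiableAt ℝ e x) (i j : m) :
    ∑ ν, x ν * pd ν (fun y => e y i j) x = radialDeriv e x i j :=
  (sum_mul_pd_eq_radialDeriv _ x).trans
    (radialDeriv_clm_comp (Matrix.entryLinearMap ℝ ℝ i j).toContinuousLinearMap he)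

variable (m) in
/-- The representation of square matrices on column vectors. -/
noncomputable def mulVecAlgHom : Matrix m m ℝ →A[ℝ] ((m → ℝ) →L[ℝ] (m → ℝ)) where
  toAlgHom := (Matrix.toLinAlgEquiv'.trans (Module.End.toContinuousLinearMap (m → ℝ))).toAlgHom
  cont := LinearMap.continuous_of_finiteDimensional
    (Matrix.toLinAlgEquiv'.trans (Module.End.toContinuousLinearMap (m → ℝ))).toLinearMap

@[simp]
theorem mulVecAlgHom_apply (M : Matrix m m ℝ) (v : m → ℝ) : mulVecAlgHom m M v = M *ᵥ v := rfl

theorem mulVecAlgHom_injective : Function.Injective (mulVecAlgHom m) :=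
  (Matrix.toLinAlgEquiv'.trans (Module.End.toContinuousLinearMap (m → ℝ))).injective

theorem mulVecAlgHom_apply_eq_self_iff {M : Matrix m m ℝ} {v : m → ℝ} :
    mulVecAlgHom m M v = v ↔ ∀ i, ∑ j, v j * M i j = v i := by
  simp [funext_iff, mulVec, dotProduct, mul_comm]

theorem sum_inv_mul_add_eq {M : Matrix m m ℝ} (hM : IsUnit M) (D : Matrix m m ℝ) (i j : m) :
    ∑ k, M⁻¹ k i * (D j k + M j k) = (D * M⁻¹ʳ) j i + (1 : Matrix m m ℝ) j i := by
  rw [← Ring.mul_inverse_cancel M hM, ← Matrix.add_apply, ← add_mul,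
    ← Matrix.nonsing_inv_eq_ringInverse, mul_apply]
  simp [mul_comm]

theorem isSelfAdjoint_radialDeriv_mul_inverse_iff_sum {n : ℕ}
    {e : (Fin n → ℝ) → Matrix m m ℝ} {x : Fin n → ℝ} (he : DifferentiableAt ℝ e x)
    (hunit : IsUnit (e x)) :
    IsSelfAdjoint (radialDeriv e x * (e x)⁻¹ʳ) ↔
      ∀ a b, ∑ μ, (e x)⁻¹ μ a * ((∑ ν, x ν * pd ν (fun y => e y b μ) x) + e x b μ)
        = ∑ μ, (e x)⁻¹ μ b * ((∑ ν, x ν * pd ν (fun y => e y a μ) x) + e x a μ) := by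
  simp only [sum_mul_pd_entry_eq_radialDeriv he, sum_inv_mul_add_eq hunit]
  refine IsHermitian.ext_iff.trans (forall₂_congr fun a b => ?_)
  rw [← Matrix.transpose_apply 1 a b, Matrix.transpose_one, add_left_inj, star_trivial]

theorem isSymmetricGaugeVielbein_mulVec_iff {n : ℕ}
    {g e : (Fin n → ℝ) → Matrix (Fin n) (Fin n) ℝ} :
    IsSymmetricGaugeVielbein (mulVecAlgHom (Fin n)) g e ↔
      (∀ a μ, ContDiff ℝ ∞ fun x => e x a μ)
      ∧ (∀ x : Fin n → ℝ, IsUnit (e x))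
      ∧ (∀ (x : Fin n → ℝ) a, ∑ μ, x μ * e x a μ = x a)
      ∧ (∀ (x : Fin n → ℝ) μ, ∑ a, x a * e x a μ = x μ)
      ∧ (∀ (x : Fin n → ℝ) a b,
        ∑ μ, (e x)⁻¹ μ a * ((∑ ν, x ν * pd ν (fun y => e y b μ) x) + e x b μ)
          = ∑ μ, (e x)⁻¹ μ b * ((∑ ν, x ν * pd ν (fun y => e y a μ) x) + e x a μ))
      ∧ (∀ (x : Fin n → ℝ) μ ν, g x μ ν = ∑ a, e x a μ * e x a ν) := by
  have hmetric : star e * e = g ↔ ∀ (x : Fin n → ℝ) μ ν, g x μ ν = ∑ a, e x a μ * e x a ν := by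
    simp [funext_iff, ← Matrix.ext_iff, mul_apply, eq_comm]
  constructor
  · intro h
    exact ⟨contDiff_matrix_iff.1 h.contDiff, h.isUnit,
      fun x => mulVecAlgHom_apply_eq_self_iff.1 (h.apply_self x),
      fun x => mulVecAlgHom_apply_eq_self_iff.1 (h.star_apply_self x),
      fun x => (isSelfAdjoint_radialDeriv_mul_inverse_iff_sum
        (h.differentiable x) (h.isUnit x)).1 (h.isSelfAdjoint x), hmetric.1 h.star_mul_self⟩
  · rintro ⟨hsmooth, hunit, he_one, he_two, he_three, he_metric⟩
    have he : ContDiff ℝ ∞ e := contDiff_matrix_iff.2 hsmooth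
    exact ⟨he, hunit, fun x => mulVecAlgHom_apply_eq_self_iff.2 (he_one x),
      fun x => mulVecAlgHom_apply_eq_self_iff.2 (he_two x),
      fun x => (isSelfAdjoint_radialDeriv_mul_inverse_iff_sum (he.differentiable (by simp) x)
        (hunit x)).2 (he_three x), hmetric.2 he_metric⟩

end Matrix

/-- Theorem 3: for every smooth symmetric positive-definite metric `g` on
`ℝⁿ` in normal coordinates (`∑_μ x^μ g_{μν}(x) = x^ν`), there exists exactly one smooth
pointwise-invertible vielbein `e` satisfying (one) `∑_μ x^μ e^a_μ = x^a`,
(two) `∑_a x^a e^a_μ = x^μ`, (three) `∑_μ e_a^μ(∑_ν x^ν ∂_ν e^b_μ + e^b_μ)` symmetric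
under `a ↔ b` (inverse matrix entries `e_a^μ(x) = (e x)⁻¹ μ a`), and
`g_{μν} = ∑_a e^a_μ e^a_ν`. Here `g x μ ν = g_{μν}(x)` and `e x a μ = e^a_μ(x)`. -/
theorem existsUnique_vielbein_of_normal_coordinates_metric
    {n : ℕ} (hn : 1 ≤ n)
    (g : (Fin n → ℝ) → Matrix (Fin n) (Fin n) ℝ)
    (hgsmooth : ∀ μ ν, ContDiff ℝ (⊤ : ℕ∞) fun x => g x μ ν)
    (hgsymm : ∀ (x : Fin n → ℝ) μ ν, g x μ ν = g x ν μ)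
    (hgpos : ∀ x : Fin n → ℝ, (g x).PosDef)
    (hnormal : ∀ (x : Fin n → ℝ) ν, ∑ μ, x μ * g x μ ν = x ν) :
    ∃! e : (Fin n → ℝ) → Matrix (Fin n) (Fin n) ℝ,
      (∀ a μ, ContDiff ℝ (⊤ : ℕ∞) fun x => e x a μ)
      ∧ (∀ x : Fin n → ℝ, IsUnit (e x))
      ∧ (∀ (x : Fin n → ℝ) a, ∑ μ, x μ * e x a μ = x a)
      ∧ (∀ (x : Fin n → ℝ) μ, ∑ a, x a * e x a μ = x μ)
      ∧ (∀ (x : Fin n → ℝ) a b,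
        ∑ μ, (e x)⁻¹ μ a * ((∑ ν, x ν * pd ν (fun y => e y b μ) x) + e x b μ)
          = ∑ μ, (e x)⁻¹ μ b * ((∑ ν, x ν * pd ν (fun y => e y a μ) x) + e x a μ))
      ∧ (∀ (x : Fin n → ℝ) μ ν, g x μ ν = ∑ a, e x a μ * e x a ν) := by
  simp only [← isSymmetricGaugeVielbein_mulVec_iff]
  open scoped Matrix.Norms.L2Operator in
  exact existsUnique_vielbein_of_normal_coordinates_metric_general mulVecAlgHom_injective
    (contDiff_matrix_iff.2 hgsmooth) (fun x => (hgpos x).isHermitian) (fun x => (hgpos x).isUnit)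
    fun x => mulVecAlgHom_apply_eq_self_iff.2 fun ν => by simpa only [hgsymm x ν] using hnormal x ν
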